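/- Let H be a bialgebra over a field k and F = ∑F¹⊗F² ∈ H⊗H a gauge transformation with inverse F⁻¹ = ∑𝒢¹⊗𝒢². Let H_F be the twisted quasi-bialgebra (same algebra and counit, comultiplication Δ_F(h) = FΔ(h)F⁻¹, reassociator Φ_F = (1⊗F)(id⊗Δ)(F)(Δ⊗id)(F⁻¹)(F⁻¹⊗1)). Then H̄_F, the vector space H regarded as a right H_F-module by right multiplication, with comultiplication Δ̄_F(h) = ∑h₁𝒢¹ ⊗ h₂𝒢² (where Δ(h) = ∑h₁⊗h₂ is the original comultiplication) and counit ε, is a right H_F-module coalgebra, i.e. a coalgebra in the monoidal category of right H_F-modules: (Δ̄_F⊗id)(Δ̄_F(h))·Φ_F⁻¹ = (id⊗Δ̄_F)(Δ̄_F(h)), Δ̄_F(hh') = Δ̄_F(h)·Δ_F(h'), (ε⊗id)(Δ̄_F(h)) = (id⊗ε)(Δ̄_F(h)) = h, and ε(hh') = ε(h)ε(h'). -/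

import Mathlib

open TensorProduct

noncomputable section

/-- The twisted comultiplication `Δ̄_F(h) = Δ(h)·F⁻¹` on a bialgebra. -/
def twistedComul (k : Type*) [Field k] (H : Type*) [Ring H] [Bialgebra k H]
    (Finv : H ⊗[k] H) : H →ₗ[k] H ⊗[k] H :=
  (LinearMap.mulRight k Finv) ∘ₗ (Coalgebra.comul : H →ₗ[k] H ⊗[k] H)

/-- The reassociator `Φ_F = (1⊗F)(id⊗Δ)(F)(Δ⊗id)(F⁻¹)(F⁻¹⊗1)` of the twisted
quasi-bialgebra `H_F` of an ordinary bialgebra `H`. -/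
def twistedPhi (k : Type*) [Field k] (H : Type*) [Ring H] [Bialgebra k H]
    (F Finv : H ⊗[k] H) : H ⊗[k] (H ⊗[k] H) :=
  ((1 : H) ⊗ₜ[k] F) *
  ((TensorProduct.map LinearMap.id (Coalgebra.comul : H →ₗ[k] H ⊗[k] H)) F) *
  ((TensorProduct.assoc k H H H)
    ((TensorProduct.map (Coalgebra.comul : H →ₗ[k] H ⊗[k] H) LinearMap.id) Finv)) *
  ((TensorProduct.assoc k H H H) (Finv ⊗ₜ[k] (1 : H)))

/-!
Since `F⁻¹F = 1`, multiplying `Φ_F` on the left by `(id⊗Δ)(F⁻¹)(1⊗F⁻¹)` cancels its first two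
factors and leaves `(Δ⊗id)(F⁻¹)(F⁻¹⊗1)`. A further multiplication by
`(id⊗Δ)(Δ(h)) = (Δ⊗id)(Δ(h))` turns this into coassociativity of `Δ̄_F` up to `Φ_F`.
The counit laws hold because the algebra maps `ε⊗id` and `id⊗ε` send `F`, hence also `F⁻¹`,
to `1`.
-/

section Twist

open Coalgebra Bialgebra

variable {R H : Type*} [CommSemiring R] [Semiring H] [Bialgebra R H]

variable (R H) in
/-- The algebra map `Δ ⊗ id`, followed by the associator so that it has the same codomain as
`id ⊗ Δ`. -/
def comulTensorId : H ⊗[R] H →ₐ[R] H ⊗[R] (H ⊗[R] H) :=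
  (Algebra.TensorProduct.assoc R R R H H H).toAlgHom.comp
    (Algebra.TensorProduct.map (comulAlgHom R H) (AlgHom.id R H))

variable (R H) in
/-- The algebra map `id ⊗ Δ`. -/
def idTensorComul : H ⊗[R] H →ₐ[R] H ⊗[R] (H ⊗[R] H) :=
  Algebra.TensorProduct.map (AlgHom.id R H) (comulAlgHom R H)

variable (R H) in
/-- The algebra map `ε ⊗ id`, with `R ⊗ H` identified with `H`. -/
def counitTensorId : H ⊗[R] H →ₐ[R] H :=
  (Algebra.TensorProduct.lid R H).toAlgHom.comp
    (Algebra.TensorProduct.map (counitAlgHom R H) (AlgHom.id R H))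

variable (R H) in
/-- The algebra map `id ⊗ ε`, with `H ⊗ R` identified with `H`. -/
def idTensorCounit : H ⊗[R] H →ₐ[R] H :=
  (Algebra.TensorProduct.rid R R H).toAlgHom.comp
    (Algebra.TensorProduct.map (AlgHom.id R H) (counitAlgHom R H))

theorem comulTensorId_comul (h : H) :
    comulTensorId R H (comul h) = idTensorComul R H (comul h) :=
  coassoc_apply h

theorem counitTensorId_comul (h : H) : counitTensorId R H (comul h) = h := by
  change TensorProduct.lid R H (counit.rTensor H (comul h)) = h
  rw [rTensor_counit_comul, TensorProduct.lid_tmul, one_smul]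

theorem idTensorCounit_comul (h : H) : idTensorCounit R H (comul h) = h := by
  change TensorProduct.rid R H (counit.lTensor H (comul h)) = h
  rw [lTensor_counit_comul, TensorProduct.rid_tmul, one_smul]

/-- The comultiplication `h ↦ Δ(h)G` obtained from `Δ` by right multiplication by `G`; for
`G = F⁻¹` it is `Δ̄_F`. -/
def comulMulRight (G : H ⊗[R] H) : H →ₗ[R] H ⊗[R] H :=
  LinearMap.mulRight R G ∘ₗ comul

theorem comulMulRight_apply (G : H ⊗[R] H) (h : H) : comulMulRight G h = comul h * G := rfl

theorem comulMulRight_mul {F G : H ⊗[R] H} (hGF : G * F = 1) (h h' : H) :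
    comulMulRight G (h * h') = comulMulRight G h * (F * comul h' * G) := by
  calc comul (h * h') * G = comul h * (G * F) * comul h' * G := by
        rw [hGF, mul_one, comul_mul]
    _ = comul h * G * (F * comul h' * G) := by simp only [mul_assoc]

theorem lTensor_comulMulRight (G x : H ⊗[R] H) :
    (comulMulRight G).lTensor H x = idTensorComul R H x * (1 ⊗ₜ[R] G) := by
  rw [comulMulRight, LinearMap.lTensor_comp_apply, ← LinearMap.mulRight_apply (R := R),
    LinearMap.mulRight_tmul, LinearMap.mulRight_one]
  rfl

theorem assoc_rTensor_comulMulRight (G x : H ⊗[R] H) :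
    TensorProduct.assoc R H H H ((comulMulRight G).rTensor H x) =
      comulTensorId R H x * TensorProduct.assoc R H H H (G ⊗ₜ[R] 1) := by
  have hrTensor : (comulMulRight G).rTensor H x = comul.rTensor H x * (G ⊗ₜ[R] 1) := by
    rw [comulMulRight, LinearMap.rTensor_comp_apply, ← LinearMap.mulRight_apply (R := R),
      LinearMap.mulRight_tmul, LinearMap.mulRight_one]
    rfl
  rw [hrTensor]
  exact map_mul (Algebra.TensorProduct.assoc R R R H H H) _ _

/-- The reassociator `Φ_F` of the twist of `H` by `F`, where `G` stands for `F⁻¹`. -/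
def twistReassociator (F G : H ⊗[R] H) : H ⊗[R] (H ⊗[R] H) :=
  (1 ⊗ₜ[R] F) * idTensorComul R H F * comulTensorId R H G *
    TensorProduct.assoc R H H H (G ⊗ₜ[R] 1)

theorem idTensorComul_mul_twistReassociator {F G : H ⊗[R] H} (hGF : G * F = 1) :
    idTensorComul R H G * (1 ⊗ₜ[R] G) * twistReassociator F G =
      comulTensorId R H G * TensorProduct.assoc R H H H (G ⊗ₜ[R] 1) := by
  have hone : ((1 : H) ⊗ₜ[R] G) * (1 ⊗ₜ[R] F) = 1 :=
    map_mul_eq_one (Algebra.TensorProduct.includeRight : H ⊗[R] H →ₐ[R] H ⊗[R] (H ⊗[R] H)) hGF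
  calc idTensorComul R H G * (1 ⊗ₜ[R] G) * twistReassociator F G
      = idTensorComul R H G * ((1 ⊗ₜ[R] G) * (1 ⊗ₜ[R] F)) * idTensorComul R H F *
          (comulTensorId R H G * TensorProduct.assoc R H H H (G ⊗ₜ[R] 1)) := by
        simp only [twistReassociator, mul_assoc]
    _ = comulTensorId R H G * TensorProduct.assoc R H H H (G ⊗ₜ[R] 1) := by
        rw [hone, mul_one, map_mul_eq_one _ hGF, one_mul]

theorem lTensor_comulMulRight_mul_twistReassociator {F G : H ⊗[R] H} (hGF : G * F = 1) (h : H) :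
    (comulMulRight G).lTensor H (comulMulRight G h) * twistReassociator F G =
      TensorProduct.assoc R H H H ((comulMulRight G).rTensor H (comulMulRight G h)) := by
  rw [lTensor_comulMulRight, assoc_rTensor_comulMulRight, comulMulRight_apply, map_mul, map_mul,
    comulTensorId_comul]
  simp only [mul_assoc, ← idTensorComul_mul_twistReassociator hGF]

theorem counitTensorId_comulMulRight {G : H ⊗[R] H} (hG : counitTensorId R H G = 1) (h : H) :
    counitTensorId R H (comulMulRight G h) = h := by
  rw [comulMulRight_apply, map_mul, counitTensorId_comul, hG, mul_one]

theorem idTensorCounit_comulMulRight {G : H ⊗[R] H} (hG : idTensorCounit R H G = 1) (h : H) :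
    idTensorCounit R H (comulMulRight G h) = h := by
  rw [comulMulRight_apply, map_mul, idTensorCounit_comul, hG, mul_one]

theorem twisted_bialgebra_right_module_coalgebra_general (F G : H ⊗[R] H) (hGF : G * F = 1)
    (hF_left : counitTensorId R H F = 1) (hF_right : idTensorCounit R H F = 1)
    (Ψ : H ⊗[R] (H ⊗[R] H)) (hΨ : twistReassociator F G * Ψ = 1) :
    (∀ h : H,
      TensorProduct.assoc R H H H ((comulMulRight G).rTensor H (comulMulRight G h)) * Ψ =
        (comulMulRight G).lTensor H (comulMulRight G h)) ∧
    (∀ h h' : H, comulMulRight G (h * h') = comulMulRight G h * (F * comul h' * G)) ∧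
    (∀ h : H, counitTensorId R H (comulMulRight G h) = h) ∧
    (∀ h : H, idTensorCounit R H (comulMulRight G h) = h) ∧
    (∀ h h' : H, counit (R := R) (h * h') = counit h * counit h') := by
  have hG_left : counitTensorId R H G = 1 := by
    simpa [hF_left] using map_mul_eq_one (counitTensorId R H) hGF
  have hG_right : idTensorCounit R H G = 1 := by
    simpa [hF_right] using map_mul_eq_one (idTensorCounit R H) hGF
  refine ⟨fun h ↦ ?_, comulMulRight_mul hGF, counitTensorId_comulMulRight hG_left,
    idTensorCounit_comulMulRight hG_right, counit_mul⟩
  rw [← lTensor_comulMulRight_mul_twistReassociator hGF, mul_assoc, hΨ, mul_one]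

end Twist

/-- Let `H` be a bialgebra and `F` a gauge transformation with
inverse `F⁻¹ = ∑𝒢¹⊗𝒢²`. Then `H̄_F`, i.e. `H` viewed as a right `H_F`-module by
right multiplication, with comultiplication `Δ̄_F(h) = ∑ h₁𝒢¹ ⊗ h₂𝒢²` and counit
`ε`, is a coalgebra in the monoidal category of right `H_F`-modules. -/
theorem twisted_bialgebra_right_module_coalgebra
    {k : Type*} [Field k] {H : Type*} [Ring H] [Bialgebra k H]
    (F Finv : H ⊗[k] H)
    (hF : F * Finv = 1) (hFinv : Finv * F = 1)
    (hnorm1 : (TensorProduct.lid k H)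
      ((TensorProduct.map (Coalgebra.counit : H →ₗ[k] k) LinearMap.id) F) = 1)
    (hnorm2 : (TensorProduct.rid k H)
      ((TensorProduct.map LinearMap.id (Coalgebra.counit : H →ₗ[k] k)) F) = 1)
    (PhiFinv : H ⊗[k] (H ⊗[k] H))
    (hPhi : twistedPhi k H F Finv * PhiFinv = 1)
    (hPhi' : PhiFinv * twistedPhi k H F Finv = 1) :
    (∀ h : H,
      ((TensorProduct.assoc k H H H)
          ((TensorProduct.map (twistedComul k H Finv) LinearMap.id)
            (twistedComul k H Finv h))) * PhiFinv =
        (TensorProduct.map LinearMap.id (twistedComul k H Finv))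
          (twistedComul k H Finv h)) ∧
    (∀ h h' : H,
      twistedComul k H Finv (h * h') =
        twistedComul k H Finv h * (F * (Coalgebra.comul : H →ₗ[k] H ⊗[k] H) h' * Finv)) ∧
    (∀ h : H, (TensorProduct.lid k H)
      ((TensorProduct.map (Coalgebra.counit : H →ₗ[k] k) LinearMap.id)
        (twistedComul k H Finv h)) = h) ∧
    (∀ h : H, (TensorProduct.rid k H)
      ((TensorProduct.map LinearMap.id (Coalgebra.counit : H →ₗ[k] k))
        (twistedComul k H Finv h)) = h) ∧
    (∀ h h' : H, (Coalgebra.counit : H →ₗ[k] k) (h * h') =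
      Coalgebra.counit h * Coalgebra.counit h') := by
  exact twisted_bialgebra_right_module_coalgebra_general F Finv hFinv hnorm1 hnorm2 PhiFinv hPhi
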